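/- For the matrices M(R,v,f,r,q,t,p,ε) = [[R, 0, 0, f, p],[0, R, 0, v, q],[vᵀR, −fᵀR, 1, r, ε],[0, 0, 0, 1, t],[0, 0, 0, 0, 1]] with R ∈ SO(n), v,f,q,p ∈ ℝ^n and r,t,ε ∈ ℝ, each such matrix is invertible and its inverse is again of this form with parameters M(R,v,f,r,q,t,p,ε)⁻¹ = M(R⁻¹, −R⁻¹v, −R⁻¹f, −r, −R⁻¹(q−tv), −t, −R⁻¹(p−tf), −ε+v·p−f·q+rt). -/

import Mathlib

/-- The standard Euclidean inner product on `ℝⁿ`. -/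
def dot {n : ℕ} (x y : Fin n → ℝ) : ℝ := ∑ i, x i * y i

/-- The `(2n+3)×(2n+3)` real matrix
`M(R,v,f,r,q,t,p,ε) = [[R,0,0,f,p],[0,R,0,v,q],[vᵀR,−fᵀR,1,r,ε],[0,0,0,1,t],[0,0,0,0,1]]`
(indexed by `Fin n ⊕ Fin n ⊕ Fin 3`), realizing the inhomogeneous Hamilton group. -/
noncomputable def IHaM {n : ℕ} (R : Matrix (Fin n) (Fin n) ℝ) (v f : Fin n → ℝ)
    (r : ℝ) (q : Fin n → ℝ) (t : ℝ) (p : Fin n → ℝ) (ε : ℝ) :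
    Matrix (Fin n ⊕ Fin n ⊕ Fin 3) (Fin n ⊕ Fin n ⊕ Fin 3) ℝ :=
  Matrix.of fun i j =>
    match i, j with
    | Sum.inl i, Sum.inl j => R i j
    | Sum.inl _, Sum.inr (Sum.inl _) => 0
    | Sum.inl i, Sum.inr (Sum.inr c) => if c = 0 then 0 else if c = 1 then f i else p i
    | Sum.inr (Sum.inl _), Sum.inl _ => 0
    | Sum.inr (Sum.inl i), Sum.inr (Sum.inl j) => R i j
    | Sum.inr (Sum.inl i), Sum.inr (Sum.inr c) =>
        if c = 0 then 0 else if c = 1 then v i else q i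
    | Sum.inr (Sum.inr k), Sum.inl j => if k = 0 then ∑ m, v m * R m j else 0
    | Sum.inr (Sum.inr k), Sum.inr (Sum.inl j) =>
        if k = 0 then -∑ m, f m * R m j else 0
    | Sum.inr (Sum.inr k), Sum.inr (Sum.inr c) =>
        if k = 0 then (if c = 0 then 1 else if c = 1 then r else ε)
        else if k = 1 then (if c = 0 then 0 else if c = 1 then 1 else t)
        else (if c = 2 then 1 else 0)

/-!
The action of `M(R,v,f,r,q,t,p,ε)` on a block vector `(x, y, (a, b, c))` is explicit, and composing
two such actions gives the group law, where `Ru · Rx = u · x` for orthogonal `R` brings the third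
block row back to the required form. The parameters of the inverse are those that the group law
sends to the parameters `(1,0,0,0,0,0,0,0)` of the identity.
-/

open Matrix

section Orthogonal

variable {m A : Type*} [Fintype m] [DecidableEq m] [CommRing A] {R : Matrix m m A}

lemma mulVec_dotProduct_mulVec_of_mem_orthogonalGroup (hR : R ∈ orthogonalGroup m A)
    (x y : m → A) : (R *ᵥ x) ⬝ᵥ (R *ᵥ y) = x ⬝ᵥ y := by
  rw [dotProduct_mulVec, ← mulVec_transpose, mulVec_mulVec,
    (mem_orthogonalGroup_iff' m A).mp hR, one_mulVec]

lemma inv_eq_transpose_of_mem_orthogonalGroup (hR : R ∈ orthogonalGroup m A) : R⁻¹ = Rᵀ :=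
  inv_eq_right_inv ((mem_orthogonalGroup_iff m A).mp hR)

lemma mul_inv_of_mem_orthogonalGroup (hR : R ∈ orthogonalGroup m A) : R * R⁻¹ = 1 := by
  rw [inv_eq_transpose_of_mem_orthogonalGroup hR, (mem_orthogonalGroup_iff m A).mp hR]

lemma inv_mem_orthogonalGroup (hR : R ∈ orthogonalGroup m A) : R⁻¹ ∈ orthogonalGroup m A := by
  rw [inv_eq_transpose_of_mem_orthogonalGroup hR, mem_orthogonalGroup_iff', transpose_transpose,
    (mem_orthogonalGroup_iff m A).mp hR]

end Orthogonal

lemma ext_of_mulVec_sumElim_vec3 {k m m' S : Type*} [Fintype m] [Fintype m'] [NonAssocSemiring S]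
    {M N : Matrix k (m ⊕ m' ⊕ Fin 3) S}
    (h : ∀ (x : m → S) (y : m' → S) (a b c : S),
      M *ᵥ (x ⊕ᵥ (y ⊕ᵥ ![a, b, c])) = N *ᵥ (x ⊕ᵥ (y ⊕ᵥ ![a, b, c]))) : M = N := by
  refine ext_iff_mulVec.mpr fun w => ?_
  have hw : w = (w ∘ .inl) ⊕ᵥ ((w ∘ .inr ∘ .inl) ⊕ᵥ
      ![w (.inr (.inr 0)), w (.inr (.inr 1)), w (.inr (.inr 2))]) := by
    ext (i | i | i)
    · rfl
    · rfl
    · fin_cases i <;> rfl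
  rw [hw]
  exact h ..

section IHaM

variable {n : ℕ}

lemma dot_eq_dotProduct (x y : Fin n → ℝ) : dot x y = x ⬝ᵥ y := rfl

variable (R : Matrix (Fin n) (Fin n) ℝ) (v f : Fin n → ℝ) (r : ℝ) (q : Fin n → ℝ) (t : ℝ)
  (p : Fin n → ℝ) (ε : ℝ)

lemma IHaM_eq_of_rows :
    IHaM R v f r q t p ε = of
      ((fun i => R i ⊕ᵥ (0 ⊕ᵥ ![0, f i, p i])) ⊕ᵥ
        ((fun i => 0 ⊕ᵥ (R i ⊕ᵥ ![0, v i, q i])) ⊕ᵥ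
          ![(v ᵥ* R) ⊕ᵥ (-(f ᵥ* R) ⊕ᵥ ![1, r, ε]),
            0 ⊕ᵥ (0 ⊕ᵥ ![0, 1, t]),
            0 ⊕ᵥ (0 ⊕ᵥ ![0, 0, 1])])) := by
  ext (i | i | i) (j | j | j) <;> (try fin_cases i) <;> (try fin_cases j) <;> rfl

lemma IHaM_mulVec (x y : Fin n → ℝ) (a b c : ℝ) :
    IHaM R v f r q t p ε *ᵥ (x ⊕ᵥ (y ⊕ᵥ ![a, b, c])) =
      (R *ᵥ x + b • f + c • p) ⊕ᵥ ((R *ᵥ y + b • v + c • q) ⊕ᵥ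
        ![dot v (R *ᵥ x) - dot f (R *ᵥ y) + a + r * b + ε * c, b + t * c, c]) := by
  rw [IHaM_eq_of_rows]
  ext (i | i | k)
  · simp only [mulVec, of_apply, Sum.elim_inl, sumElim_dotProduct_sumElim, vec3_dotProduct',
      zero_dotProduct, Pi.add_apply, Pi.smul_apply, smul_eq_mul]
    ring
  · simp only [mulVec, of_apply, Sum.elim_inl, Sum.elim_inr, sumElim_dotProduct_sumElim,
      vec3_dotProduct', zero_dotProduct, Pi.add_apply, Pi.smul_apply, smul_eq_mul]
    ring
  · simp only [mulVec, of_apply, Sum.elim_inr, dot_eq_dotProduct, dotProduct_mulVec]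
    fin_cases k
    · simp only [Fin.zero_eta, cons_val_zero, sumElim_dotProduct_sumElim, vec3_dotProduct',
        neg_dotProduct]
      ring
    · simp [sumElim_dotProduct_sumElim]
    · simp [sumElim_dotProduct_sumElim]

lemma IHaM_one : IHaM (1 : Matrix (Fin n) (Fin n) ℝ) 0 0 0 0 0 0 0 = 1 :=
  ext_of_mulVec_sumElim_vec3 fun x y a b c => by simp [IHaM_mulVec, dot_eq_dotProduct]

variable {R}

lemma IHaM_mul_IHaM (hR : R ∈ orthogonalGroup (Fin n) ℝ) (R' : Matrix (Fin n) (Fin n) ℝ)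
    (v' f' : Fin n → ℝ) (r' : ℝ) (q' : Fin n → ℝ) (t' : ℝ) (p' : Fin n → ℝ) (ε' : ℝ) :
    IHaM R v f r q t p ε * IHaM R' v' f' r' q' t' p' ε' =
      IHaM (R * R') (v + R *ᵥ v') (f + R *ᵥ f') (r + r' + dot v (R *ᵥ f') - dot f (R *ᵥ v'))
        (q + R *ᵥ q' + t' • v) (t + t') (p + R *ᵥ p' + t' • f)
        (ε + ε' + dot v (R *ᵥ p') - dot f (R *ᵥ q') + r * t') := by
  refine ext_of_mulVec_sumElim_vec3 fun x y a b c => ?_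
  rw [← mulVec_mulVec]
  simp only [IHaM_mulVec, dot_eq_dotProduct, ← mulVec_mulVec, mulVec_add, mulVec_smul,
    dotProduct_add, add_dotProduct, dotProduct_smul, smul_eq_mul,
    mulVec_dotProduct_mulVec_of_mem_orthogonalGroup hR]
  refine congrArg₂ Sum.elim (by module) (congrArg₂ Sum.elim (by module) ?_)
  exact congrArg₂ vecCons (by ring) (congrArg₂ vecCons (by ring) rfl)

lemma IHaM_mul_IHaM_inv_eq_one (hR : R ∈ orthogonalGroup (Fin n) ℝ) :
    IHaM R v f r q t p ε *
      IHaM R⁻¹ (-(R⁻¹ *ᵥ v)) (-(R⁻¹ *ᵥ f)) (-r) (-(R⁻¹ *ᵥ (q - t • v))) (-t)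
        (-(R⁻¹ *ᵥ (p - t • f))) (-ε + dot v p - dot f q + r * t) = 1 := by
  have hRR : R * R⁻¹ = 1 := mul_inv_of_mem_orthogonalGroup hR
  have hcancel (w : Fin n → ℝ) : R *ᵥ -(R⁻¹ *ᵥ w) = -w := by
    rw [mulVec_neg, mulVec_mulVec, hRR, one_mulVec]
  rw [IHaM_mul_IHaM (hR := hR), hRR, ← IHaM_one]
  simp only [hcancel, dot_eq_dotProduct, dotProduct_neg, dotProduct_sub, dotProduct_smul,
    smul_eq_mul, dotProduct_comm f v]
  congr 1
  · module
  · module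
  · ring
  · module
  · ring
  · module
  · ring

theorem inhomogeneous_hamilton_matrix_inverse_general (hR : R ∈ orthogonalGroup (Fin n) ℝ) :
    IsUnit (IHaM R v f r q t p ε) ∧
    R⁻¹ ∈ orthogonalGroup (Fin n) ℝ ∧
    (IHaM R v f r q t p ε)⁻¹
      = IHaM R⁻¹ (-(R⁻¹ *ᵥ v)) (-(R⁻¹ *ᵥ f)) (-r) (-(R⁻¹ *ᵥ (q - t • v))) (-t)
          (-(R⁻¹ *ᵥ (p - t • f))) (-ε + dot v p - dot f q + r * t) := by
  have hmul := IHaM_mul_IHaM_inv_eq_one v f r q t p ε hR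
  exact ⟨.of_mul_eq_one _ hmul, inv_mem_orthogonalGroup hR, inv_eq_right_inv hmul⟩

end IHaM

/-- Each matrix `M(R,v,f,r,q,t,p,ε)` with `R ∈ SO(n)` is invertible, and its inverse is
again of this form:
`M(R,v,f,r,q,t,p,ε)⁻¹ = M(R⁻¹, −R⁻¹v, −R⁻¹f, −r, −R⁻¹(q−tv), −t, −R⁻¹(p−tf),
  −ε+v·p−f·q+rt)`. -/
theorem inhomogeneous_hamilton_matrix_inverse {n : ℕ}
    (R : Matrix (Fin n) (Fin n) ℝ) (hR : R ∈ Matrix.specialOrthogonalGroup (Fin n) ℝ)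
    (v f q p : Fin n → ℝ) (r t ε : ℝ) :
    IsUnit (IHaM R v f r q t p ε) ∧
    R⁻¹ ∈ Matrix.specialOrthogonalGroup (Fin n) ℝ ∧
    (IHaM R v f r q t p ε)⁻¹
      = IHaM R⁻¹ (-(R⁻¹.mulVec v)) (-(R⁻¹.mulVec f)) (-r)
          (-(R⁻¹.mulVec (q - t • v))) (-t) (-(R⁻¹.mulVec (p - t • f)))
          (-ε + dot v p - dot f q + r * t) := by
  obtain ⟨hO, hdet⟩ := mem_specialOrthogonalGroup_iff.mp hR
  obtain ⟨hunit, hinvO, hinv⟩ := inhomogeneous_hamilton_matrix_inverse_general v f r q t p ε hO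
  have hdetInv : R⁻¹.det = 1 := by rw [det_nonsing_inv, hdet, Ring.inverse_one]
  exact ⟨hunit, mem_specialOrthogonalGroup_iff.mpr ⟨hinvO, hdetInv⟩, hinv⟩
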